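/- arXiv:2508.02615 — 3 statements merged into one kernel-verified Lean document; each statement's English description precedes it below -/
import Mathlib

section
/- Let (E,d_E) be a separable metric space and let μ ∈ 𝒫_1(E). Then (m/n) · 𝔼[W_1(μ_m, μ)] ≤ 𝔼[W_1(μ_n, μ)] for all m, n ∈ ℕ with m ≤ n; and (1/2) · 𝔼[W_1(μ_m, μ)] ≤ 𝔼[W_1(μ_{2m}, μ)] ≤ 𝔼[W_1(μ_m, μ)] for all m ∈ ℕ, where μ_k denotes the empirical measure of μ with sample size k. -/
open MeasureTheory ENNReal Filter

noncomputable section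

/-- The `p`-Wasserstein distance between two measures on a metric space, as an
extended nonnegative real: the infimum over all couplings `γ` (measures on `E × E`
with the prescribed marginals) of `(∫ d(x,y)^p dγ)^(1/p)`. -/
def Wp {E : Type*} [MetricSpace E] [MeasurableSpace E] (p : ℝ) (μ ν : Measure E) : ℝ≥0∞ :=
  ⨅ γ ∈ {γ : Measure (E × E) | γ.map Prod.fst = μ ∧ γ.map Prod.snd = ν},
    (∫⁻ z, edist z.1 z.2 ^ p ∂γ) ^ (1 / p)

/-- The (uniform) discrete measure `(1/n) ∑ δ_{X i}`. -/
def empiricalMeasure {E : Type*} [MeasurableSpace E] (n : ℕ) (X : Fin n → E) : Measure E :=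
  (n : ℝ≥0∞)⁻¹ • ∑ i, Measure.dirac (X i)

/-- The law of `n` independent samples of `μ`. -/
def sampleMeasure {E : Type*} [MeasurableSpace E] (μ : Measure E) (n : ℕ) :
    Measure (Fin n → E) :=
  Measure.pi fun _ => μ

/-- `𝔼[W_p(μ_n, μ)]`, where `μ_n` is the empirical measure of `μ` with sample size `n`. -/
def expWp {E : Type*} [MetricSpace E] [MeasurableSpace E] (p : ℝ) (μ : Measure E) (n : ℕ) :
    ℝ≥0∞ :=
  ∫⁻ X, Wp p (empiricalMeasure n X) μ ∂(sampleMeasure μ n)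

/-- `(𝔼[W_p(μ_n, μ)^p])^{1/p}`, where `μ_n` is the empirical measure of `μ` with
sample size `n`. -/
def expWpPow {E : Type*} [MetricSpace E] [MeasurableSpace E] (p : ℝ) (μ : Measure E) (n : ℕ) :
    ℝ≥0∞ :=
  (∫⁻ X, (Wp p (empiricalMeasure n X) μ) ^ p ∂(sampleMeasure μ n)) ^ (1 / p)

/-- The optimal uniform quantization error
`b_{n,p}(μ) = inf_{x₁,…,x_n} W_p(μ, (1/n) ∑ δ_{x_i})`. -/
def unifQuantErr {E : Type*} [MetricSpace E] [MeasurableSpace E] (p : ℝ) (n : ℕ)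
    (μ : Measure E) : ℝ≥0∞ :=
  ⨅ x : Fin n → E, Wp p μ (empiricalMeasure n x)

/-- The optimal quantization error `e_{n,p}(μ)`: the infimum of `W_p(μ, ν)` over all
probability measures `ν` supported on at most `n` points. -/
def quantErr {E : Type*} [MetricSpace E] [MeasurableSpace E] (p : ℝ) (n : ℕ)
    (μ : Measure E) : ℝ≥0∞ :=
  ⨅ ν ∈ {ν : Measure E | IsProbabilityMeasure ν ∧
      ∃ S : Finset E, S.card ≤ n ∧ ν (↑S : Set E)ᶜ = 0}, Wp p μ ν

/-- `μ` has a finite `p`-th moment: `∫ d(x, x₀)^p dμ(x) < ∞` for some `x₀`. -/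
def HasFiniteMoment {E : Type*} [MetricSpace E] [MeasurableSpace E] (p : ℝ)
    (μ : Measure E) : Prop :=
  ∃ x₀ : E, ∫⁻ x, edist x x₀ ^ p ∂μ ≠ ∞

end

/-!
Write `a n = n * 𝔼[W₁(μ_n, μ)]`. By Kantorovich–Rubinstein duality,
`n * W₁(μ_n, μ) = sup_f ∑ i, (∫ f ∂μ - f (X i))` over `1`-Lipschitz `f`. For each fixed `f`, further
samples contribute terms of mean zero, so `a` is nondecreasing by Jensen's inequality; and a
supremum of sums is at most the sum of the suprema, so `a` is subadditive. The three inequalities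
are `a m ≤ a n`, `a m ≤ a (2 * m)` and `a (2 * m) ≤ 2 * a m`.

The hard half of the duality, with a finitely supported source, comes from separating a pair
(masses, cost) from the convex cone of all pairs achieved by splitting multiples of `μ`: the normal
of a supporting hyperplane is a potential `u`, and `y ↦ min_i (dist (X i) y + u i)` is the required
`1`-Lipschitz function.
-/

open scoped NNReal Topology

section SupportingFunctional

variable {F : Type*} [AddCommGroup F] [Module ℝ F] [TopologicalSpace F] [IsTopologicalAddGroup F]
  [ContinuousSMul ℝ F]

lemma exists_le_of_notMem_of_convex {C : Set F} (hC : Convex ℝ C)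
    (hC' : (interior C).Nonempty) {x : F} (hx : x ∉ C) :
    ∃ φ : StrongDual ℝ F, (∀ z ∈ C, φ x ≤ φ z) ∧ ∀ z ∈ interior C, φ x < φ z := by
  obtain ⟨φ, hφ⟩ := geometric_hahn_banach_point_open hC.interior isOpen_interior
    (fun h ↦ hx (interior_subset h))
  refine ⟨φ, fun z hz ↦ ?_, hφ⟩
  have hz' : z ∈ closure (interior C) := by
    rw [hC.closure_interior_eq_closure_of_nonempty_interior hC']
    exact subset_closure hz
  exact closure_minimal (fun y hy ↦ (hφ y hy).le) (isClosed_Ici.preimage φ.continuous) hz'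

/-- The interior point `(x, β)` above `(x, α)` is what prevents a vertical hyperplane. -/
lemma exists_nonvertical_supporting_functional {C : Set (F × ℝ)} (hC : Convex ℝ C) {x : F}
    {α β : ℝ} (hα : (x, α) ∉ C) (hαβ : α ≤ β) (hβ : (x, β) ∈ interior C) :
    ∃ u : StrongDual ℝ F, ∀ z ∈ C, α + u x ≤ z.2 + u z.1 := by
  obtain ⟨φ, hφ, hφ_int⟩ := exists_le_of_notMem_of_convex hC ⟨_, hβ⟩ hα
  set l : ℝ := φ (0, 1)
  have hφ_apply (y : F) (r : ℝ) : φ (y, r) = φ (y, 0) + r * l := by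
    rw [← smul_eq_mul, ← map_smul, ← map_add]
    simp
  have hl : 0 < l := by
    have h := hφ_int _ hβ
    rw [hφ_apply x α, hφ_apply x β] at h
    exact pos_of_mul_pos_right (by linarith : 0 < (β - α) * l) (sub_nonneg.2 hαβ)
  refine ⟨l⁻¹ • φ.comp (.inl ℝ F ℝ), fun ⟨y, r⟩ hz ↦ ?_⟩
  have h := hφ _ hz
  rw [hφ_apply x α, hφ_apply y r] at h
  refine le_of_mul_le_mul_right ?_ hl
  simpa [add_mul, mul_right_comm _ _ l, hl.ne', add_comm] using h

end SupportingFunctional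

section SemidiscreteDuality

variable {Ω ι : Type*}

/-- The `c`-transform `y ↦ min_i (c(i, y) + u_i)` of a potential `u` on a finite set of sources. -/
noncomputable def cTransform (c : ι → Ω → ℝ) (u : ι → ℝ) (y : Ω) : ℝ :=
  ⨅ i, (c i y + u i)

lemma cTransform_le [Finite ι] (c : ι → Ω → ℝ) (u : ι → ℝ) (y : Ω) (i : ι) :
    cTransform c u y ≤ c i y + u i :=
  ciInf_le (Set.finite_range _).bddBelow i

lemma exists_cTransform_eq [Finite ι] [Nonempty ι] (c : ι → Ω → ℝ) (u : ι → ℝ) (y : Ω) :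
    ∃ i, cTransform c u y = c i y + u i :=
  (exists_eq_ciInf_of_finite (f := fun i ↦ c i y + u i)).imp fun _ h ↦ h.symm

lemma lipschitzWith_cTransform [PseudoMetricSpace Ω] [Finite ι] [Nonempty ι] {K : ℝ≥0}
    {c : ι → Ω → ℝ} (hc : ∀ i, LipschitzWith K (c i)) (u : ι → ℝ) :
    LipschitzWith K (cTransform c u) := by
  refine LipschitzWith.of_le_add_mul K fun x y ↦ ?_
  obtain ⟨i, hi⟩ := exists_cTransform_eq c u y
  have hxy := (hc i).le_add_mul x y
  linarith [cTransform_le c u x i]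

variable [MeasurableSpace Ω]

lemma exists_measurable_partition_of_cover [Finite ι] {B : ι → Set Ω}
    (hB : ∀ i, MeasurableSet (B i)) (hcover : ⋃ i, B i = Set.univ) :
    ∃ A : ι → Set Ω, (∀ i, MeasurableSet (A i)) ∧ (∀ i, A i ⊆ B i) ∧
      Pairwise (Function.onFun Disjoint A) ∧ ⋃ i, A i = Set.univ := by
  cases nonempty_fintype ι
  obtain ⟨A, hAB, hsup, hdisj⟩ :=
    Fintype.exists_disjointed_le fun i ↦ (⟨B i, hB i⟩ : Subtype (MeasurableSet (α := Ω)))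
  have hcoe (D : ι → Subtype (MeasurableSet (α := Ω))) :
      ((Finset.univ.sup D : Subtype MeasurableSet) : Set Ω) = ⋃ i, (D i : Set Ω) := by
    rw [Finset.apply_sup_eq_sup_comp Subtype.val (fun _ _ ↦ rfl) rfl]
    simp [Finset.sup_eq_iSup]
  refine ⟨fun i ↦ A i, fun i ↦ (A i).2, hAB, fun i j hij ↦ ?_, ?_⟩
  · exact (disjoint_subtype_iff (fun _ _ hs ht ↦ hs.inter ht) _).1 (hdisj hij)
  · rw [← hcoe, hsup, hcoe, hcover]

variable [Fintype ι]

/-- The cone of all pairs `(a, r)` such that some multiple `t • μ` can be split into pieces `ν i` of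
mass `a i` with total cost `∑ i, ∫ c i ∂(ν i) ≤ r`. Letting `t` vary gives it interior points. -/
noncomputable def transportCone (μ : Measure Ω) (c : ι → Ω → ℝ) : ConvexCone ℝ ((ι → ℝ) × ℝ) where
  carrier := {z | ∃ (t : ℝ≥0) (ν : ι → Measure Ω), ∑ i, ν i = t • μ ∧
    (∀ i, IsFiniteMeasure (ν i)) ∧ (∀ i, Integrable (c i) (ν i)) ∧
    (∀ i, (ν i).real Set.univ = z.1 i) ∧ ∑ i, ∫ y, c i y ∂(ν i) ≤ z.2}
  smul_mem' := by
    rintro a ha z ⟨t, ν, hsum, hfin, hint, hmass, hcost⟩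
    lift a to ℝ≥0 using ha.le
    refine ⟨a * t, fun i ↦ a • ν i, ?_, fun i ↦ inferInstance,
      fun i ↦ (hint i).smul_measure_nnreal, fun i ↦ ?_, ?_⟩
    · rw [← Finset.smul_sum, hsum, mul_smul]
    · simp [← hmass i]
    · simp only [integral_smul_nnreal_measure, ← Finset.smul_sum]
      exact smul_le_smul_of_nonneg_left hcost ha.le
  add_mem' := by
    rintro z ⟨t, ν, hsum, hfin, hint, hmass, hcost⟩ z' ⟨t', ν', hsum', hfin', hint', hmass', hcost'⟩
    refine ⟨t + t', ν + ν', ?_, fun i ↦ inferInstanceAs (IsFiniteMeasure (ν i + ν' i)),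
      fun i ↦ (hint i).add_measure (hint' i), fun i ↦ ?_, ?_⟩
    · simp only [Pi.add_apply, Finset.sum_add_distrib, hsum, hsum', add_smul]
    · simp [← hmass i, ← hmass' i, measureReal_add_apply]
    · simp only [Pi.add_apply, integral_add_measure (hint _) (hint' _), Finset.sum_add_distrib]
      exact add_le_add hcost hcost'

lemma real_univ_finsetSum (ν : ι → Measure Ω) [∀ i, IsFiniteMeasure (ν i)] :
    (∑ i, ν i).real Set.univ = ∑ i, (ν i).real Set.univ := by
  simp [measureReal_def, ENNReal.toReal_sum]

variable {μ : Measure Ω} {c : ι → Ω → ℝ}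

/-- Assigning each point `y` to a source `i` that attains the minimum splits `μ` at total cost
`∫ cTransform c u ∂μ`, once the cost of source `i` is raised by `u i`. -/
lemma exists_mem_transportCone_eq_integral_cTransform [IsFiniteMeasure μ] [Nonempty ι]
    (hcm : ∀ i, Measurable (c i)) (hc : ∀ i, Integrable (c i) μ) (u : ι → ℝ) :
    ∃ z ∈ transportCone μ c, ∫ y, cTransform c u y ∂μ = z.2 + ∑ i, z.1 i * u i := by
  have hm : Measurable (cTransform c u) := .iInf fun i ↦ (hcm i).add_const _
  obtain ⟨A, hA, hAmin, hdisj, hcover⟩ := exists_measurable_partition_of_cover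
    (B := fun i ↦ {y | cTransform c u y = c i y + u i})
    (fun i ↦ measurableSet_eq_fun hm ((hcm i).add_const _))
    (Set.iUnion_eq_univ_iff.2 (exists_cTransform_eq c u))
  have hsum : ∑ i, μ.restrict (A i) = μ := by
    rw [← Measure.sum_fintype, ← Measure.restrict_iUnion hdisj hA, hcover, Measure.restrict_univ]
  have hpiece (i : ι) :
      ∫ y in A i, cTransform c u y ∂μ = ∫ y in A i, c i y ∂μ + μ.real (A i) * u i := by
    rw [setIntegral_congr_fun (hA i) (hAmin i), integral_add (hc i).integrableOn
      (integrable_const _), setIntegral_const, smul_eq_mul]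
  have hint (i : ι) : IntegrableOn (cTransform c u) (A i) μ :=
    (integrableOn_congr_fun (hAmin i) (hA i)).2 ((hc i).integrableOn.add (integrable_const _))
  refine ⟨(fun i ↦ μ.real (A i), ∑ i, ∫ y in A i, c i y ∂μ), ⟨1, fun i ↦ μ.restrict (A i),
    by rw [hsum, one_smul], fun i ↦ inferInstance, fun i ↦ (hc i).integrableOn,
    fun i ↦ by simp, le_rfl⟩, ?_⟩
  rw [← Finset.sum_add_distrib, ← Finset.sum_congr rfl fun i _ ↦ hpiece i,
    ← integral_finsetSum_measure fun i _ ↦ hint i, hsum]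

variable [IsProbabilityMeasure μ]

lemma mem_transportCone_of_sum_mul_integral_le (hc : ∀ i, Integrable (c i) μ) {z : (ι → ℝ) × ℝ}
    (hz : ∀ i, 0 ≤ z.1 i) (hcost : ∑ i, z.1 i * ∫ y, c i y ∂μ ≤ z.2) : z ∈ transportCone μ c := by
  obtain ⟨a, r⟩ := z
  lift a to ι → ℝ≥0 using hz
  refine ⟨∑ i, a i, fun i ↦ a i • μ, (Finset.sum_smul ..).symm, fun i ↦ inferInstance,
    fun i ↦ (hc i).smul_measure_nnreal, fun i ↦ ?_, ?_⟩
  · simp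
  · simpa [integral_smul_nnreal_measure, NNReal.smul_def] using hcost

lemma mem_interior_transportCone (hc : ∀ i, Integrable (c i) μ) {z : (ι → ℝ) × ℝ}
    (hz : ∀ i, 0 < z.1 i) (hcost : ∑ i, z.1 i * ∫ y, c i y ∂μ < z.2) :
    z ∈ interior (transportCone μ c : Set ((ι → ℝ) × ℝ)) := by
  have hpos : ∀ᶠ y : (ι → ℝ) × ℝ in 𝓝 z, ∀ i, 0 < y.1 i :=
    eventually_all.2 fun i ↦ continuousAt_const.eventually_lt (by fun_prop) (hz i)
  have hlt : ∀ᶠ y : (ι → ℝ) × ℝ in 𝓝 z, ∑ i, y.1 i * ∫ x, c i x ∂μ < y.2 :=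
    ContinuousAt.eventually_lt (by fun_prop) (by fun_prop) hcost
  rw [mem_interior_iff_mem_nhds]
  filter_upwards [hpos, hlt] with y hy hy'
  exact mem_transportCone_of_sum_mul_integral_le hc (fun i ↦ (hy i).le) hy'.le

theorem exists_add_sum_le_mul_integral_cTransform [Nonempty ι] (hcm : ∀ i, Measurable (c i))
    (hc : ∀ i, Integrable (c i) μ) {w : ι → ℝ≥0} (hw : ∀ i, 0 < w i) {α : ℝ}
    (hα : ∀ ν : ι → Measure Ω, ∑ i, ν i = (∑ i, w i) • μ → (∀ i, (ν i).real Set.univ = w i) →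
      (∀ i, Integrable (c i) (ν i)) → α < ∑ i, ∫ y, c i y ∂(ν i)) :
    ∃ u : ι → ℝ, α + ∑ i, w i * u i ≤ (∑ i, w i) * ∫ y, cTransform c u y ∂μ := by
  set a : ι → ℝ := fun i ↦ w i
  have hnotMem : (a, α) ∉ (transportCone μ c : Set ((ι → ℝ) × ℝ)) := by
    rintro ⟨t, ν, hsum, hfin, hint, hmass, hcost⟩
    have ht : ∑ i, w i = t := by
      have h := congrArg (·.real Set.univ) hsum
      simp only [real_univ_finsetSum, hmass, measureReal_nnreal_smul_apply, probReal_univ,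
        mul_one] at h
      exact NNReal.coe_injective (by push_cast; exact h)
    exact (hα ν (ht ▸ hsum) hmass hint).not_ge hcost
  set β : ℝ := max α (∑ i, a i * ∫ y, c i y ∂μ + 1)
  have hβ : (a, β) ∈ interior (transportCone μ c : Set ((ι → ℝ) × ℝ)) :=
    mem_interior_transportCone hc hw ((lt_add_one _).trans_le (le_max_right _ _))
  obtain ⟨φ, hφ⟩ := exists_nonvertical_supporting_functional (transportCone μ c).convex
    hnotMem (le_max_left _ _) hβ
  obtain ⟨u, hu⟩ : ∃ u : ι → ℝ, ∀ b, φ b = ∑ i, b i * u i := by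
    classical exact ⟨_, φ.toLinearMap.pi_apply_eq_sum_univ⟩
  obtain ⟨z, hz, hz_cost⟩ := exists_mem_transportCone_eq_integral_cTransform hcm hc u
  have hs : (0 : ℝ) < ∑ i, w i := by
    exact_mod_cast Finset.sum_pos (fun i _ ↦ hw i) Finset.univ_nonempty
  have hle := hφ _ ((transportCone μ c).smul_mem hs hz)
  rw [Prod.smul_fst, map_smul, hu, hu, Prod.smul_snd, ← smul_add, ← hz_cost] at hle
  exact ⟨u, hle⟩

end SemidiscreteDuality

lemma ofReal_integral_le_lintegral_ofReal {Ω : Type*} [MeasurableSpace Ω] {γ : Measure Ω}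
    (g : Ω → ℝ) : ENNReal.ofReal (∫ x, g x ∂γ) ≤ ∫⁻ x, ENNReal.ofReal (g x) ∂γ := by
  by_cases hg : Integrable g γ
  · rw [integral_eq_lintegral_pos_part_sub_lintegral_neg_part hg]
    exact (ENNReal.ofReal_le_ofReal (sub_le_self _ ENNReal.toReal_nonneg)).trans
      ENNReal.ofReal_toReal_le
  · simp [integral_undef hg]

lemma ofReal_sum_integral_dist {Ω ι : Type*} [PseudoMetricSpace Ω] [MeasurableSpace Ω] [Fintype ι]
    {x : ι → Ω} {ν : ι → Measure Ω} (hν : ∀ i, Integrable (fun y ↦ dist (x i) y) (ν i)) :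
    ENNReal.ofReal (∑ i, ∫ y, dist (x i) y ∂(ν i)) = ∑ i, ∫⁻ y, edist (x i) y ∂(ν i) := by
  rw [ENNReal.ofReal_sum_of_nonneg fun i _ ↦ integral_nonneg fun y ↦ dist_nonneg]
  simp only [edist_dist]
  exact Finset.sum_congr rfl fun i _ ↦
    ofReal_integral_eq_lintegral_ofReal (hν i) (.of_forall fun y ↦ dist_nonneg)

section EmpiricalMeasure

variable {E : Type*} [MeasurableSpace E] [MeasurableSingletonClass E] {n : ℕ} (X : Fin n → E)

lemma integrable_empiricalMeasure {f : E → ℝ} : Integrable f (empiricalMeasure n X) := by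
  rcases n.eq_zero_or_pos with rfl | hn
  · simp [empiricalMeasure]
  · exact (integrable_finsetSum_measure.2 fun i _ ↦ integrable_dirac (by simp)).smul_measure
      (by simp [hn.ne'])

lemma integral_empiricalMeasure (f : E → ℝ) :
    ∫ x, f x ∂(empiricalMeasure n X) = (n : ℝ)⁻¹ * ∑ i, f (X i) := by
  rw [empiricalMeasure, integral_smul_measure,
    integral_finsetSum_measure fun i _ ↦ integrable_dirac (by simp)]
  simp [ENNReal.toReal_inv]

lemma ofReal_sum_integral_sub (μ : Measure E) (f : E → ℝ) :
    ENNReal.ofReal (∑ i, (∫ y, f y ∂μ - f (X i))) =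
      n * ENNReal.ofReal (∫ y, f y ∂μ - ∫ y, f y ∂(empiricalMeasure n X)) := by
  rcases n.eq_zero_or_pos with rfl | hn
  · simp
  rw [← ENNReal.ofReal_natCast, ← ENNReal.ofReal_mul n.cast_nonneg, integral_empiricalMeasure]
  congr 1
  simp only [Finset.sum_sub_distrib, Finset.sum_const, Finset.card_univ, Fintype.card_fin,
    nsmul_eq_mul]
  field_simp

end EmpiricalMeasure

section Wasserstein

variable {E : Type*} [MetricSpace E] [MeasurableSpace E] {μ ν : Measure E}

/-- The Kantorovich dual problem for transporting `∑ i, δ_{X i}` to `|ι| • μ`, with values in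
`ℝ≥0∞`: the truncation at `0` is harmless because `f = 0` is a competitor. -/
noncomputable def kantorovichDual {ι : Type*} [Fintype ι] (μ : Measure E) (X : ι → E) : ℝ≥0∞ :=
  ⨆ (f : E → ℝ) (_ : LipschitzWith 1 f), ENNReal.ofReal (∑ i, (∫ y, f y ∂μ - f (X i)))

lemma le_kantorovichDual {ι : Type*} [Fintype ι] {f : E → ℝ} (hf : LipschitzWith 1 f)
    (X : ι → E) : ENNReal.ofReal (∑ i, (∫ y, f y ∂μ - f (X i))) ≤ kantorovichDual μ X :=
  le_iSup₂ (f := fun (f : E → ℝ) (_ : LipschitzWith 1 f) ↦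
    ENNReal.ofReal (∑ i, (∫ y, f y ∂μ - f (X i)))) f hf

lemma kantorovichDual_append_le {m k : ℕ} (X : Fin m → E) (Y : Fin k → E) :
    kantorovichDual μ (Fin.append X Y) ≤ kantorovichDual μ X + kantorovichDual μ Y := by
  refine iSup₂_le fun f hf ↦ ?_
  simp only [Fin.sum_univ_add, Fin.append_left, Fin.append_right]
  exact ENNReal.ofReal_add_le.trans (add_le_add (le_kantorovichDual hf X) (le_kantorovichDual hf Y))

variable [BorelSpace E]

lemma measurable_kantorovichDual [SecondCountableTopology E] {ι : Type*} [Fintype ι] :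
    Measurable (kantorovichDual μ : (ι → E) → ℝ≥0∞) := by
  refine LowerSemicontinuous.measurable (lowerSemicontinuous_iSup fun f ↦
    lowerSemicontinuous_iSup fun hf ↦ Continuous.lowerSemicontinuous ?_)
  have := hf.continuous
  exact ENNReal.continuous_ofReal.comp (by fun_prop)

lemma HasFiniteMoment.integrable_of_lipschitzWith [IsFiniteMeasure μ] (hμ : HasFiniteMoment 1 μ)
    {K : ℝ≥0} {f : E → ℝ} (hf : LipschitzWith K f) : Integrable f μ := by
  obtain ⟨x₀, hx₀⟩ := hμ
  have hdist : Integrable (fun x ↦ dist x x₀) μ := by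
    refine ⟨by fun_prop, ?_⟩
    rw [hasFiniteIntegral_iff_enorm]
    refine lt_of_le_of_lt (lintegral_mono fun x ↦ ?_) (lt_top_iff_ne_top.2 hx₀)
    rw [ENNReal.rpow_one, edist_dist, Real.enorm_of_nonneg dist_nonneg]
  refine ((hdist.const_mul K).add (integrable_const ‖f x₀‖)).mono'
    hf.continuous.aestronglyMeasurable (.of_forall fun x ↦ ?_)
  have hx := hf.dist_le_mul x x₀
  rw [dist_eq_norm] at hx
  simp only [Pi.add_apply]
  linarith [norm_sub_norm_le (f x) (f x₀)]

theorem ofReal_integral_sub_integral_le_Wp {f : E → ℝ} (hf : LipschitzWith 1 f)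
    (hν : Integrable f ν) (hμ : Integrable f μ) :
    ENNReal.ofReal (∫ x, f x ∂μ - ∫ x, f x ∂ν) ≤ Wp 1 ν μ := by
  refine le_iInf₂ fun γ hγ ↦ ?_
  obtain ⟨rfl, rfl⟩ := hγ
  have hsnd : Integrable (fun z : E × E ↦ f z.2) γ := hμ.comp_measurable measurable_snd
  have hfst : Integrable (fun z : E × E ↦ f z.1) γ := hν.comp_measurable measurable_fst
  calc ENNReal.ofReal (∫ x, f x ∂(γ.map Prod.snd) - ∫ x, f x ∂(γ.map Prod.fst))
    _ = ENNReal.ofReal (∫ z, (f z.2 - f z.1) ∂γ) := by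
      rw [integral_map (by fun_prop) hf.continuous.aestronglyMeasurable,
        integral_map (by fun_prop) hf.continuous.aestronglyMeasurable,
        integral_sub hsnd hfst]
    _ ≤ ∫⁻ z, ENNReal.ofReal (f z.2 - f z.1) ∂γ := ofReal_integral_le_lintegral_ofReal _
    _ ≤ ∫⁻ z, edist z.1 z.2 ∂γ := lintegral_mono fun z ↦ by
      rw [edist_dist, dist_comm]
      refine ENNReal.ofReal_le_ofReal ((le_abs_self _).trans ?_)
      simpa [Real.dist_eq] using hf.dist_le_mul z.2 z.1
    _ = (∫⁻ z, edist z.1 z.2 ^ (1 : ℝ) ∂γ) ^ (1 / 1 : ℝ) := by simp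

theorem natCast_mul_Wp_one_le_sum_lintegral [SecondCountableTopology E] {n : ℕ} (X : Fin n → E)
    {ν : Fin n → Measure E} [∀ i, IsProbabilityMeasure (ν i)] (hν : ∑ i, ν i = (n : ℝ≥0) • μ) :
    n * Wp 1 (empiricalMeasure n X) μ ≤ ∑ i, ∫⁻ y, edist (X i) y ∂(ν i) := by
  rcases n.eq_zero_or_pos with rfl | hn
  · simp
  have hn0 : (n : ℝ≥0∞) ≠ 0 := by exact_mod_cast hn.ne'
  set γ : Measure (E × E) := (n : ℝ≥0∞)⁻¹ • ∑ i, (Measure.dirac (X i)).prod (ν i) with hγ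
  have hfst : γ.map Prod.fst = empiricalMeasure n X := by
    simp [hγ, Measure.map_finset_sum', Measure.map_smul, empiricalMeasure,
      measurable_fst.aemeasurable]
  have hsnd : γ.map Prod.snd = μ := by
    rw [hγ, Measure.map_smul, Measure.map_finset_sum' (by fun_prop)]
    simp only [Measure.map_snd_prod, measure_univ, one_smul, hν]
    ext s
    simp [← mul_assoc, ENNReal.inv_mul_cancel hn0]
  have hcost : ∫⁻ z, edist z.1 z.2 ∂γ = (n : ℝ≥0∞)⁻¹ * ∑ i, ∫⁻ y, edist (X i) y ∂(ν i) := by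
    rw [hγ, lintegral_smul_measure, lintegral_finsetSum_measure, smul_eq_mul]
    congr! 2 with i
    rw [Measure.dirac_prod, lintegral_map (by fun_prop) (by fun_prop)]
  calc n * Wp 1 (empiricalMeasure n X) μ
    _ ≤ n * ∫⁻ z, edist z.1 z.2 ∂γ := by
      gcongr
      exact (iInf₂_le γ ⟨hfst, hsnd⟩).trans_eq (by simp)
    _ = ∑ i, ∫⁻ y, edist (X i) y ∂(ν i) := by
      rw [hcost, ← mul_assoc, ENNReal.mul_inv_cancel hn0 (by simp), one_mul]

variable [IsProbabilityMeasure μ] [SecondCountableTopology E]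

lemma exists_lipschitzWith_le_sum_integral_sub (hμ : HasFiniteMoment 1 μ) {n : ℕ} (hn : n ≠ 0)
    (X : Fin n → E) {α : ℝ}
    (hα : ENNReal.ofReal α < n * Wp 1 (empiricalMeasure n X) μ) :
    ∃ f : E → ℝ, LipschitzWith 1 f ∧ α ≤ ∑ i, (∫ y, f y ∂μ - f (X i)) := by
  have : NeZero n := ⟨hn⟩
  have hlip (i : Fin n) : LipschitzWith 1 fun y ↦ dist (X i) y := .dist_right (X i)
  obtain ⟨u, hu⟩ := exists_add_sum_le_mul_integral_cTransform (μ := μ) (w := fun _ : Fin n ↦ 1)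
    (c := fun i y ↦ dist (X i) y) (α := α) (fun i ↦ (hlip i).continuous.measurable)
    (fun i ↦ hμ.integrable_of_lipschitzWith (hlip i)) (fun _ ↦ one_pos)
    fun ν hsum hmass hint ↦ by
      have hprob (i : Fin n) : IsProbabilityMeasure (ν i) :=
        isProbabilityMeasure_iff_real.2 (hmass i)
      refine ENNReal.ofReal_lt_ofReal_iff'.1 (hα.trans_le ?_) |>.1
      rw [ofReal_sum_integral_dist hint]
      exact natCast_mul_Wp_one_le_sum_lintegral X (by simpa using hsum)
  refine ⟨cTransform (fun i y ↦ dist (X i) y) u, lipschitzWith_cTransform hlip u, ?_⟩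
  have hle (i : Fin n) : cTransform (fun i y ↦ dist (X i) y) u (X i) ≤ u i := by
    simpa using cTransform_le (fun i y ↦ dist (X i) y) u (X i) i
  have hsum_le := Finset.sum_le_sum fun i (_ : i ∈ Finset.univ) ↦ hle i
  simp only [NNReal.coe_one, NNReal.coe_natCast, one_mul, Finset.sum_const, Finset.card_univ,
    Fintype.card_fin, nsmul_eq_mul, mul_one, Finset.sum_sub_distrib] at hu ⊢
  linarith

theorem natCast_mul_Wp_one_empiricalMeasure (hμ : HasFiniteMoment 1 μ) {n : ℕ} (X : Fin n → E) :
    n * Wp 1 (empiricalMeasure n X) μ = kantorovichDual μ X := by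
  apply le_antisymm
  · rcases eq_or_ne n 0 with rfl | hn
    · simp
    refine le_of_forall_lt fun a ha ↦ ?_
    obtain ⟨α, -, haα, hα⟩ := ENNReal.lt_iff_exists_real_btwn.1 ha
    obtain ⟨f, hf, hαf⟩ := exists_lipschitzWith_le_sum_integral_sub hμ hn X hα
    exact haα.trans_le ((ENNReal.ofReal_le_ofReal hαf).trans (le_kantorovichDual hf X))
  · refine iSup₂_le fun f hf ↦ ?_
    rw [ofReal_sum_integral_sub]
    gcongr
    exact ofReal_integral_sub_integral_le_Wp hf (integrable_empiricalMeasure X)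
      (hμ.integrable_of_lipschitzWith hf)

end Wasserstein

section Sampling

variable {E : Type*} [MeasurableSpace E] {μ : Measure E} [IsProbabilityMeasure μ]

instance isProbabilityMeasure_sampleMeasure (n : ℕ) :
    IsProbabilityMeasure (sampleMeasure μ n) :=
  inferInstanceAs (IsProbabilityMeasure (Measure.pi fun _ ↦ μ))

lemma measurePreserving_fin_append (m k : ℕ) :
    MeasurePreserving (fun z : (Fin m → E) × (Fin k → E) ↦ Fin.append z.1 z.2)
      ((sampleMeasure μ m).prod (sampleMeasure μ k)) (sampleMeasure μ (m + k)) := by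
  unfold sampleMeasure
  convert (measurePreserving_piCongrLeft (fun _ ↦ μ) (finSumFinEquiv (m := m) (n := k))).comp
    (measurePreserving_sumPiEquivProdPi_symm fun _ ↦ μ) using 1
  funext z i
  obtain ⟨j, rfl⟩ := finSumFinEquiv.surjective i
  simp only [Function.comp, MeasurableEquiv.piCongrLeft_apply_apply]
  rcases j with j | j
  · exact Fin.append_left ..
  · exact Fin.append_right ..

lemma lintegral_sampleMeasure_add {m k : ℕ} {F : (Fin (m + k) → E) → ℝ≥0∞} (hF : Measurable F) :
    ∫⁻ Z, F Z ∂(sampleMeasure μ (m + k)) =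
      ∫⁻ X, ∫⁻ Y, F (Fin.append X Y) ∂(sampleMeasure μ k) ∂(sampleMeasure μ m) := by
  have h := measurePreserving_fin_append (μ := μ) m k
  rw [← h.lintegral_comp hF]
  exact lintegral_prod _ (hF.comp h.measurable).aemeasurable

variable {f : E → ℝ} (hf : Integrable f μ) (k : ℕ)
include hf

lemma integrable_sum_integral_sub_sampleMeasure :
    Integrable (fun Y : Fin k → E ↦ ∑ j, (∫ x, f x ∂μ - f (Y j))) (sampleMeasure μ k) :=
  integrable_finsetSum _ fun _ _ ↦ (integrable_const _).sub (integrable_comp_eval hf)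

lemma integral_sum_integral_sub_sampleMeasure :
    ∫ Y : Fin k → E, ∑ j, (∫ x, f x ∂μ - f (Y j)) ∂(sampleMeasure μ k) = 0 := by
  have hint (j : Fin k) : Integrable (fun Y : Fin k → E ↦ f (Y j)) (sampleMeasure μ k) :=
    integrable_comp_eval hf
  have hmean (j : Fin k) : ∫ Y, f (Y j) ∂(sampleMeasure μ k) = ∫ x, f x ∂μ :=
    integral_comp_eval hf.aestronglyMeasurable
  have hcentered (j : Fin k) : ∫ Y, (∫ x, f x ∂μ - f (Y j)) ∂(sampleMeasure μ k) = 0 := by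
    rw [integral_sub (integrable_const _) (hint j), hmean]
    simp
  rw [integral_finsetSum (f := fun j (Y : Fin k → E) ↦ ∫ x, f x ∂μ - f (Y j)) _
    fun j _ ↦ (integrable_const _).sub (hint j)]
  exact Finset.sum_eq_zero fun j _ ↦ hcentered j

end Sampling

section ExpectedDistance

variable {E : Type*} [MetricSpace E] [MeasurableSpace E] [BorelSpace E] {μ : Measure E}
  [IsProbabilityMeasure μ] (hμ : HasFiniteMoment 1 μ)
include hμ

/-- By Jensen's inequality, since the extra samples contribute `0` in expectation for each `f`. -/
lemma kantorovichDual_le_lintegral_append {m : ℕ} (X : Fin m → E) (k : ℕ) :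
    kantorovichDual μ X ≤ ∫⁻ Y, kantorovichDual μ (Fin.append X Y) ∂(sampleMeasure μ k) := by
  refine iSup₂_le fun f hf ↦ ?_
  have hfμ := hμ.integrable_of_lipschitzWith hf
  set S : ℝ := ∑ i, (∫ x, f x ∂μ - f (X i))
  calc ENNReal.ofReal S
    _ = ENNReal.ofReal
          (∫ Y : Fin k → E, (S + ∑ j, (∫ x, f x ∂μ - f (Y j))) ∂(sampleMeasure μ k)) := by
      rw [integral_add (integrable_const _) (integrable_sum_integral_sub_sampleMeasure hfμ k),
        integral_sum_integral_sub_sampleMeasure hfμ k]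
      simp
    _ ≤ ∫⁻ Y : Fin k → E, ENNReal.ofReal (S + ∑ j, (∫ x, f x ∂μ - f (Y j)))
          ∂(sampleMeasure μ k) := ofReal_integral_le_lintegral_ofReal _
    _ ≤ ∫⁻ Y, kantorovichDual μ (Fin.append X Y) ∂(sampleMeasure μ k) := by
      refine lintegral_mono fun Y ↦ ?_
      simpa only [Fin.sum_univ_add, Fin.append_left, Fin.append_right]
        using le_kantorovichDual hf (Fin.append X Y)

variable [SecondCountableTopology E]

lemma natCast_mul_expWp_one (n : ℕ) :
    n * expWp 1 μ n = ∫⁻ X, kantorovichDual μ X ∂(sampleMeasure μ n) := by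
  rw [expWp, ← lintegral_const_mul' _ _ (ENNReal.natCast_ne_top n)]
  simp only [natCast_mul_Wp_one_empiricalMeasure hμ]

theorem monotone_natCast_mul_expWp_one : Monotone fun n : ℕ ↦ n * expWp 1 μ n := by
  intro m n hmn
  obtain ⟨k, rfl⟩ := Nat.exists_eq_add_of_le hmn
  simp only [natCast_mul_expWp_one hμ, lintegral_sampleMeasure_add measurable_kantorovichDual]
  exact lintegral_mono fun X ↦ kantorovichDual_le_lintegral_append hμ X k

theorem natCast_add_mul_expWp_one_le (m k : ℕ) :
    (m + k : ℕ) * expWp 1 μ (m + k) ≤ m * expWp 1 μ m + k * expWp 1 μ k := by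
  simp only [natCast_mul_expWp_one hμ, lintegral_sampleMeasure_add measurable_kantorovichDual]
  calc ∫⁻ X, ∫⁻ Y, kantorovichDual μ (Fin.append X Y) ∂(sampleMeasure μ k) ∂(sampleMeasure μ m)
    _ ≤ ∫⁻ X, ∫⁻ Y, (kantorovichDual μ X + kantorovichDual μ Y) ∂(sampleMeasure μ k)
          ∂(sampleMeasure μ m) :=
      lintegral_mono fun X ↦ lintegral_mono fun Y ↦ kantorovichDual_append_le X Y
    _ = _ := by
      simp [lintegral_add_left measurable_const, lintegral_add_left measurable_kantorovichDual]

end ExpectedDistance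

/-- **Lemma (basicstability).** Let `(E, d_E)` be a separable metric space and
`μ ∈ 𝒫₁(E)`. Then `(m/n) 𝔼[W₁(μ_m, μ)] ≤ 𝔼[W₁(μ_n, μ)]` for all `m ≤ n` in `ℕ`,
and `(1/2) 𝔼[W₁(μ_m, μ)] ≤ 𝔼[W₁(μ_{2m}, μ)] ≤ 𝔼[W₁(μ_m, μ)]` for all `m ∈ ℕ`. -/
theorem stmt_9 {E : Type*} [MetricSpace E] [TopologicalSpace.SeparableSpace E]
    [MeasurableSpace E] [BorelSpace E]
    (μ : Measure E) [IsProbabilityMeasure μ] (hμ : HasFiniteMoment 1 μ) :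
    (∀ m n : ℕ, 1 ≤ m → m ≤ n →
      ((m : ℝ≥0∞) / (n : ℝ≥0∞)) * expWp 1 μ m ≤ expWp 1 μ n) ∧
    (∀ m : ℕ, 1 ≤ m →
      2⁻¹ * expWp 1 μ m ≤ expWp 1 μ (2 * m) ∧ expWp 1 μ (2 * m) ≤ expWp 1 μ m) := by
  have := UniformSpace.secondCountable_of_separable E
  have hdiv {m n : ℕ} (hmn : m ≤ n) : ((m : ℝ≥0∞) / (n : ℝ≥0∞)) * expWp 1 μ m ≤ expWp 1 μ n := by
    rw [← ENNReal.mul_div_right_comm]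
    exact ENNReal.div_le_of_le_mul' (monotone_natCast_mul_expWp_one hμ hmn)
  refine ⟨fun m n _ ↦ hdiv, fun m hm ↦ ⟨?_, ?_⟩⟩
  · have hm0 : (m : ℝ≥0∞) ≠ 0 := by exact_mod_cast (zero_lt_one.trans_le hm).ne'
    have hhalf : ((m : ℝ≥0∞) / (2 * m : ℕ)) = 2⁻¹ := by
      rw [Nat.cast_mul, Nat.cast_ofNat, ← one_div,
        ← ENNReal.mul_div_mul_right 1 2 hm0 (ENNReal.natCast_ne_top m), one_mul]
    exact hhalf ▸ hdiv (by lia : m ≤ 2 * m)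
  · have h := natCast_add_mul_expWp_one_le hμ m m
    rw [← two_mul, ← add_mul, ← Nat.cast_add, ← two_mul] at h
    refine (ENNReal.mul_le_mul_iff_right ?_ (ENNReal.natCast_ne_top _)).1 h
    exact_mod_cast (by lia : 2 * m ≠ 0)
end

section
/- Let (E,d_E) be a finite metric space, let p ≥ 1 and let μ and ν be probability measures on E. Let ζ and η be (nonnegative) measures on E with ζ ≤ η ≤ μ∧ν (pointwise on singletons) and η(E) < 1. Then (1 − ζ(E))^{1/p} · W_p((μ − ζ)/(1 − ζ(E)), (ν − ζ)/(1 − ζ(E))) ≤ (1 − η(E))^{1/p} · W_p((μ − η)/(1 − η(E)), (ν − η)/(1 − η(E))). -/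
open MeasureTheory ENNReal Filter

/-!
Passing from `η` to the smaller measure `ζ` adds the common mass `η - ζ` back to both arguments of
the transport problem. Leaving that mass in place costs nothing, so any transport plan from `μ - η`
to `ν - η` extends at no cost to one from `μ - ζ` to `ν - ζ`. The factors `(1 - ζ(E))^{1/p}` and
`(1 - η(E))^{1/p}` undo the normalizations, since `W_p` is homogeneous of degree `1/p` in the
masses.
-/

section MeasureOrder

variable {E : Type*} [MeasurableSpace E]

lemma measure_le_of_forall_singleton_le [Countable E] [MeasurableSingletonClass E]
    {μ ν : Measure E} (h : ∀ x, μ {x} ≤ ν {x}) : μ ≤ ν :=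
  Measure.le_iff.2 fun s hs => by
    rw [← μ.tsum_indicator_apply_singleton s hs, ← ν.tsum_indicator_apply_singleton s hs]
    exact ENNReal.tsum_le_tsum fun x => Set.indicator_le_indicator (h x)

lemma measure_sub_add_sub_cancel {μ η ζ : Measure E} [IsFiniteMeasure η]
    (hημ : η ≤ μ) (hζη : ζ ≤ η) : (μ - η) + (η - ζ) = μ - ζ := by
  have : IsFiniteMeasure ζ := isFiniteMeasure_of_le η hζη
  calc (μ - η) + (η - ζ) = (μ - η) + (η - ζ) + ζ - ζ := Measure.add_sub_cancel.symm
    _ = μ - ζ := by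
      rw [add_assoc, Measure.sub_add_cancel_of_le hζη, Measure.sub_add_cancel_of_le hημ]

end MeasureOrder

section Wasserstein

variable {E : Type*} [MetricSpace E] [MeasurableSpace E] {p : ℝ} {c : ℝ≥0∞}

lemma Wp_le_of_coupling {μ ν : Measure E} {γ : Measure (E × E)} (hfst : γ.map Prod.fst = μ)
    (hsnd : γ.map Prod.snd = ν) : Wp p μ ν ≤ (∫⁻ z, edist z.1 z.2 ^ p ∂γ) ^ (1 / p) :=
  iInf₂_le γ ⟨hfst, hsnd⟩

lemma lintegral_edist_rpow_map_diag (hp : 0 < p) (κ : Measure E) :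
    ∫⁻ z, edist z.1 z.2 ^ p ∂(κ.map fun x => (x, x)) = 0 :=
  -- `lintegral_map_le` needs no measurability of `edist`, which can fail when `E` is not separable.
  nonpos_iff_eq_zero.1 <| (lintegral_map_le _ _).trans_eq (by simp [hp])

lemma Wp_add_right_le (hp : 0 < p) (μ ν κ : Measure E) : Wp p (μ + κ) (ν + κ) ≤ Wp p μ ν := by
  refine le_iInf₂ fun γ ⟨hfst, hsnd⟩ => ?_
  have hdiag : Measurable (fun x : E => (x, x)) := measurable_id.prodMk measurable_id
  have hcost : ∫⁻ z, edist z.1 z.2 ^ p ∂(γ + κ.map fun x => (x, x)) =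
      ∫⁻ z, edist z.1 z.2 ^ p ∂γ := by
    rw [lintegral_add_measure, lintegral_edist_rpow_map_diag hp, add_zero]
  rw [← hcost]
  apply Wp_le_of_coupling
  · rw [Measure.map_add _ _ measurable_fst, hfst, Measure.map_map measurable_fst hdiag]
    exact congrArg (μ + ·) Measure.map_id
  · rw [Measure.map_add _ _ measurable_snd, hsnd, Measure.map_map measurable_snd hdiag]
    exact congrArg (ν + ·) Measure.map_id

lemma Wp_sub_le_Wp_sub (hp : 0 < p) {μ ν ζ η : Measure E} [IsFiniteMeasure η]
    (hζη : ζ ≤ η) (hημ : η ≤ μ) (hην : η ≤ ν) : Wp p (μ - ζ) (ν - ζ) ≤ Wp p (μ - η) (ν - η) := by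
  rw [← measure_sub_add_sub_cancel hημ hζη, ← measure_sub_add_sub_cancel hην hζη]
  exact Wp_add_right_le hp _ _ _

lemma Wp_smul_le (hc₀ : c ≠ 0) (hc : c ≠ ∞) (μ ν : Measure E) :
    Wp p (c • μ) (c • ν) ≤ c ^ (1 / p) * Wp p μ ν := by
  have hroot₀ : c ^ (1 / p) ≠ 0 := (ENNReal.rpow_pos hc₀.bot_lt hc).ne'
  have hroot : c ^ (1 / p) ≠ ∞ := ENNReal.rpow_ne_top_of_ne_zero hc₀ hc
  conv_rhs => unfold Wp
  simp_rw [ENNReal.mul_iInf_of_ne hroot₀ hroot]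
  refine le_iInf₂ fun γ ⟨hfst, hsnd⟩ => ?_
  have hcost : (∫⁻ z, edist z.1 z.2 ^ p ∂(c • γ)) ^ (1 / p) =
      c ^ (1 / p) * (∫⁻ z, edist z.1 z.2 ^ p ∂γ) ^ (1 / p) := by
    rw [lintegral_smul_measure, smul_eq_mul, ENNReal.mul_rpow_eq_ite]
    simp [hc₀, hc]
  rw [← hcost]
  apply Wp_le_of_coupling
  · rw [Measure.map_smul, hfst]
  · rw [Measure.map_smul, hsnd]

lemma Wp_smul (hc₀ : c ≠ 0) (hc : c ≠ ∞) (μ ν : Measure E) :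
    Wp p (c • μ) (c • ν) = c ^ (1 / p) * Wp p μ ν := by
  have hroot₀ : c ^ (1 / p) ≠ 0 := (ENNReal.rpow_pos hc₀.bot_lt hc).ne'
  have hroot : c ^ (1 / p) ≠ ∞ := ENNReal.rpow_ne_top_of_ne_zero hc₀ hc
  refine (Wp_smul_le hc₀ hc μ ν).antisymm ?_
  calc c ^ (1 / p) * Wp p μ ν = c ^ (1 / p) * Wp p (c⁻¹ • c • μ) (c⁻¹ • c • ν) := by
        rw [smul_smul, smul_smul, ENNReal.inv_mul_cancel hc₀ hc, one_smul, one_smul]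
    _ ≤ c ^ (1 / p) * (c⁻¹ ^ (1 / p) * Wp p (c • μ) (c • ν)) := by
        gcongr
        exact Wp_smul_le (ENNReal.inv_ne_zero.2 hc) (ENNReal.inv_ne_top.2 hc₀) _ _
    _ = Wp p (c • μ) (c • ν) := by
        rw [ENNReal.inv_rpow, ← mul_assoc, ENNReal.mul_inv_cancel hroot₀ hroot, one_mul]

lemma rpow_mul_Wp_inv_smul (hc₀ : c ≠ 0) (hc : c ≠ ∞) (μ ν : Measure E) :
    c ^ (1 / p) * Wp p (c⁻¹ • μ) (c⁻¹ • ν) = Wp p μ ν := by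
  rw [← Wp_smul hc₀ hc, smul_smul, smul_smul, ENNReal.mul_inv_cancel hc₀ hc, one_smul, one_smul]

end Wasserstein

theorem stmt_13_general {E : Type*} [MetricSpace E] [MeasurableSpace E] {p : ℝ} (hp : 0 < p)
    {μ ν ζ η : Measure E} (hζη : ζ ≤ η) (hημ : η ≤ μ) (hην : η ≤ ν) (hη1 : η Set.univ < 1) :
    (1 - ζ Set.univ) ^ (1 / p) *
        Wp p ((1 - ζ Set.univ)⁻¹ • (μ - ζ)) ((1 - ζ Set.univ)⁻¹ • (ν - ζ))
      ≤ (1 - η Set.univ) ^ (1 / p) *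
          Wp p ((1 - η Set.univ)⁻¹ • (μ - η)) ((1 - η Set.univ)⁻¹ • (ν - η)) := by
  have : IsFiniteMeasure η := ⟨hη1.trans one_lt_top⟩
  have hζ1 : ζ Set.univ < 1 := (hζη Set.univ).trans_lt hη1
  rw [rpow_mul_Wp_inv_smul (tsub_pos_of_lt hζ1).ne' (sub_ne_top one_ne_top),
    rpow_mul_Wp_inv_smul (tsub_pos_of_lt hη1).ne' (sub_ne_top one_ne_top)]
  exact Wp_sub_le_Wp_sub hp hζη hημ hην

/-- **Lemma (dollar2).** Let `μ` and `ν` be probability measures on a finite metric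
space `E`, and let `ζ ≤ η ≤ μ∧ν` be measures on `E` (pointwise on singletons) with
`η(E) < 1`. Then
`(1 − ζ(E))^{1/p} W_p((μ−ζ)/(1−ζ(E)), (ν−ζ)/(1−ζ(E)))
  ≤ (1 − η(E))^{1/p} W_p((μ−η)/(1−η(E)), (ν−η)/(1−η(E)))`. -/
theorem stmt_13 {E : Type*} [MetricSpace E] [Fintype E]
    [MeasurableSpace E] [BorelSpace E]
    (p : ℝ) (hp : 1 ≤ p)
    (μ ν ζ η : Measure E) [IsProbabilityMeasure μ] [IsProbabilityMeasure ν]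
    (hζη : ∀ x : E, ζ {x} ≤ η {x})
    (hη : ∀ x : E, η {x} ≤ min (μ {x}) (ν {x}))
    (hη1 : η Set.univ < 1) :
    (1 - ζ Set.univ) ^ (1 / p) *
        Wp p ((1 - ζ Set.univ)⁻¹ • (μ - ζ)) ((1 - ζ Set.univ)⁻¹ • (ν - ζ))
      ≤ (1 - η Set.univ) ^ (1 / p) *
          Wp p ((1 - η Set.univ)⁻¹ • (μ - η)) ((1 - η Set.univ)⁻¹ • (ν - η)) := by
  exact stmt_13_general (zero_lt_one.trans_le hp) (measure_le_of_forall_singleton_le hζη)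
    (measure_le_of_forall_singleton_le fun x => (hη x).trans (min_le_left _ _))
    (measure_le_of_forall_singleton_le fun x => (hη x).trans (min_le_right _ _)) hη1
end

section
/- Let E be a finite metric space with at least two points, let m ∈ ℕ, and let f₁,…,f_m : E → ℝ satisfy ‖f_i‖_Lip ≤ 1 for each i. Let s₁,…,s_m be independent Rademacher random variables (ℙ(s_i = 1) = ℙ(s_i = −1) = 1/2). Then 𝔼‖∑_{i=1}^m s_i f_i‖_Lip² ≤ 14·m·ln|E|, where |E| is the cardinality of E. -/
open MeasureTheory Filter

noncomputable section

/-- The Lipschitz seminorm `‖f‖_Lip = sup_{x ≠ y} (f x − f y)/d(x,y)` of a real-valued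
function on a metric space. -/
noncomputable def lipSeminorm {E : Type*} [MetricSpace E] (f : E → ℝ) : ℝ :=
  ⨆ q : {q : E × E // q.1 ≠ q.2}, (f q.1.1 - f q.1.2) / dist q.1.1 q.1.2

end

/-! If `N` random variables `X i` are sub-Gaussian with variance proxy `c`, then the exponential
moment of order `t` of `⨆ i, |X i|` is at most `2 N exp (c t² / 2)`. Since `u²` is dominated by
`b² + 2 b exp (u - b)`, choosing `b = c t² = 2 log (2 N)` bounds the second moment of the supremum
by `2 c (log (2 N) + 1)`. The Lipschitz seminorm of `∑ i, s i • f i` is such a supremum over the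
fewer than `|E|²` ordered pairs of distinct points, and each of its difference quotients is a
combination of the independent signs `s i` with coefficients bounded by `‖f i‖_Lip`. -/

open ProbabilityTheory Real
open scoped NNReal

section MaximalInequality

lemma sq_le_sq_add_two_mul_exp_sub {b u : ℝ} (hb : 1 ≤ b) (hu : 0 ≤ u) :
    u ^ 2 ≤ b ^ 2 + 2 * b * exp (u - b) := by
  rcases le_total u b with hub | hbu
  · have hexp : 0 ≤ 2 * b * exp (u - b) := by positivity
    nlinarith
  · have hquad : 2 * b * (1 + (u - b) + (u - b) ^ 2 / 2) ≤ 2 * b * exp (u - b) := by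
      gcongr
      exact quadratic_le_exp_of_nonneg (sub_nonneg.2 hbu)
    nlinarith [mul_nonneg (sub_nonneg.2 hb) (sq_nonneg (u - b))]

lemma exp_mul_iSup_abs_le_sum {ι : Type*} [Fintype ι] [Nonempty ι] (x : ι → ℝ) {t : ℝ}
    (ht : 0 ≤ t) :
    exp (t * ⨆ i, |x i|) ≤ ∑ i, (exp (t * x i) + exp (-t * x i)) := by
  obtain ⟨j, hj⟩ := exists_eq_ciSup_of_finite (f := fun i ↦ |x i|)
  calc exp (t * ⨆ i, |x i|) = exp |t * x j| := by rw [← hj, abs_mul, abs_of_nonneg ht]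
    _ ≤ exp (t * x j) + exp (-t * x j) := by simpa only [neg_mul] using exp_abs_le (t * x j)
    _ ≤ ∑ i, (exp (t * x i) + exp (-t * x i)) :=
      Finset.single_le_sum (f := fun i ↦ exp (t * x i) + exp (-t * x i))
        (fun _ _ ↦ by positivity) (Finset.mem_univ j)

variable {Ω ι : Type*} {mΩ : MeasurableSpace Ω} {μ : Measure Ω} {X : ι → Ω → ℝ}

lemma integral_sq_iSup_abs_eq_zero [Countable ι] (hX : ∀ i, HasSubgaussianMGF (X i) 0 μ) :
    ∫ ω, (⨆ i, |X i ω|) ^ 2 ∂μ = 0 := by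
  have hzero : ∀ᵐ ω ∂μ, ∀ i, X i ω = 0 :=
    ae_all_iff.2 fun i ↦ (hX i).ae_eq_zero_of_hasSubgaussianMGF_zero
  refine integral_eq_zero_of_ae (hzero.mono fun ω hω ↦ ?_)
  simp [hω]

variable [Fintype ι] {c : ℝ≥0}

lemma integrable_sum_exp_mul_add_exp_neg_mul (hX : ∀ i, HasSubgaussianMGF (X i) c μ) (t : ℝ) :
    Integrable (fun ω ↦ ∑ i, (exp (t * X i ω) + exp (-t * X i ω))) μ :=
  integrable_finsetSum _ fun i _ ↦
    ((hX i).integrable_exp_mul t).add ((hX i).integrable_exp_mul (-t))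

lemma integral_sum_exp_mul_add_exp_neg_mul_le (hX : ∀ i, HasSubgaussianMGF (X i) c μ) (t : ℝ) :
    ∫ ω, ∑ i, (exp (t * X i ω) + exp (-t * X i ω)) ∂μ
      ≤ 2 * Fintype.card ι * exp (c * t ^ 2 / 2) := by
  have hint (i : ι) (r : ℝ) : Integrable (fun ω ↦ exp (r * X i ω)) μ :=
    (hX i).integrable_exp_mul r
  calc ∫ ω, ∑ i, (exp (t * X i ω) + exp (-t * X i ω)) ∂μ
      = ∑ i, (mgf (X i) μ t + mgf (X i) μ (-t)) := by
        rw [integral_finsetSum _ fun i _ ↦ by exact (hint i t).add (hint i (-t))]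
        exact Finset.sum_congr rfl fun i _ ↦ integral_add (hint i t) (hint i (-t))
    _ ≤ ∑ _i : ι, (exp (c * t ^ 2 / 2) + exp (c * t ^ 2 / 2)) := by
        gcongr with i
        · exact (hX i).mgf_le t
        · simpa only [neg_sq] using (hX i).mgf_le (-t)
    _ = 2 * Fintype.card ι * exp (c * t ^ 2 / 2) := by
        rw [Finset.sum_const, Finset.card_univ, nsmul_eq_mul]
        ring

lemma sq_mul_integral_sq_iSup_abs_le [IsProbabilityMeasure μ] [Nonempty ι]
    (hX : ∀ i, HasSubgaussianMGF (X i) c μ) {b t : ℝ} (hb : 1 ≤ b) (ht : 0 ≤ t) :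
    t ^ 2 * ∫ ω, (⨆ i, |X i ω|) ^ 2 ∂μ
      ≤ b ^ 2 + 2 * b * exp (-b) * (2 * Fintype.card ι * exp (c * t ^ 2 / 2)) := by
  have hint := integrable_sum_exp_mul_add_exp_neg_mul hX t
  calc t ^ 2 * ∫ ω, (⨆ i, |X i ω|) ^ 2 ∂μ = ∫ ω, (t * ⨆ i, |X i ω|) ^ 2 ∂μ := by
        simp_rw [mul_pow, integral_const_mul]
    _ ≤ ∫ ω, (b ^ 2 + 2 * b * exp (-b) * ∑ i, (exp (t * X i ω) + exp (-t * X i ω))) ∂μ := by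
        refine integral_mono_of_nonneg (.of_forall fun ω ↦ sq_nonneg _)
          ((integrable_const _).add (hint.const_mul _)) (.of_forall fun ω ↦ ?_)
        have hsup : 0 ≤ t * ⨆ i, |X i ω| := mul_nonneg ht (iSup_nonneg fun i ↦ abs_nonneg _)
        calc (t * ⨆ i, |X i ω|) ^ 2
            ≤ b ^ 2 + 2 * b * exp (t * (⨆ i, |X i ω|) - b) := sq_le_sq_add_two_mul_exp_sub hb hsup
          _ = b ^ 2 + 2 * b * exp (-b) * exp (t * ⨆ i, |X i ω|) := by
              rw [mul_assoc _ (exp (-b)), ← exp_add, neg_add_eq_sub]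
          _ ≤ b ^ 2 + 2 * b * exp (-b) * ∑ i, (exp (t * X i ω) + exp (-t * X i ω)) := by
              gcongr
              exact exp_mul_iSup_abs_le_sum _ ht
    _ = b ^ 2 + 2 * b * exp (-b) * ∫ ω, ∑ i, (exp (t * X i ω) + exp (-t * X i ω)) ∂μ := by
        rw [integral_add (integrable_const _) (hint.const_mul _), integral_const_mul]
        simp
    _ ≤ b ^ 2 + 2 * b * exp (-b) * (2 * Fintype.card ι * exp (c * t ^ 2 / 2)) := by
        gcongr
        exact integral_sum_exp_mul_add_exp_neg_mul_le hX t

theorem integral_sq_iSup_abs_le [IsProbabilityMeasure μ] [Nonempty ι]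
    (hX : ∀ i, HasSubgaussianMGF (X i) c μ) :
    ∫ ω, (⨆ i, |X i ω|) ^ 2 ∂μ ≤ 2 * c * (log (2 * Fintype.card ι) + 1) := by
  set L := log (2 * Fintype.card ι) with hL
  have hcard : (1 : ℝ) ≤ Fintype.card ι := by exact_mod_cast Fintype.card_pos
  have hL_lower : log 2 ≤ L := log_le_log two_pos (by linarith)
  have hL_pos : 0 < L := (log_pos one_lt_two).trans_le hL_lower
  rcases eq_zero_or_pos c with rfl | hc
  · simp [integral_sq_iSup_abs_eq_zero hX]
  have ht : √(2 * L / c) ^ 2 = 2 * L / c := sq_sqrt (by positivity)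
  have hexp : exp (-(2 * L)) * (2 * Fintype.card ι * exp (c * (2 * L / c) / 2)) = 1 := by
    have hcL : c * (2 * L / c) / 2 = L := by field_simp
    rw [hcL, ← exp_log (show (0 : ℝ) < 2 * Fintype.card ι by positivity), ← hL, ← exp_add,
      ← exp_add]
    simp [two_mul]
  have hbound := sq_mul_integral_sq_iSup_abs_le hX (b := 2 * L) (t := √(2 * L / c))
    (by linarith [log_two_gt_d9]) (sqrt_nonneg _)
  rw [ht, mul_assoc (2 * (2 * L)), hexp] at hbound
  refine le_of_mul_le_mul_left (hbound.trans_eq ?_) (show 0 < 2 * L / c by positivity)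
  field_simp

end MaximalInequality

section DistinctPairs

variable {α : Type*} [Nontrivial α]

instance nonempty_fst_ne_snd : Nonempty {q : α × α // q.1 ≠ q.2} :=
  let ⟨x, y, hxy⟩ := exists_pair_ne α
  ⟨⟨(x, y), hxy⟩⟩

variable (α) in
lemma log_two_mul_card_fst_ne_snd_le [Fintype α] [DecidableEq α] :
    log (2 * Fintype.card {q : α × α // q.1 ≠ q.2}) ≤ log 2 + 2 * log (Fintype.card α) := by
  have hpairs : (Fintype.card {q : α × α // q.1 ≠ q.2} : ℝ) ≤ Fintype.card α ^ 2 := by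
    rw [sq, ← Nat.cast_mul, ← Fintype.card_prod]
    exact_mod_cast Fintype.card_subtype_le _
  calc log (2 * Fintype.card {q : α × α // q.1 ≠ q.2})
      ≤ log (2 * Fintype.card α ^ 2) := log_le_log (by positivity) (by gcongr)
    _ = log 2 + 2 * log (Fintype.card α) := by
      rw [log_mul two_ne_zero (by positivity), log_pow, Nat.cast_ofNat]

end DistinctPairs

section LipschitzSeminorm

variable {E : Type*} [MetricSpace E]

/-- The difference quotient of `f` along an ordered pair of distinct points, so that
`lipSeminorm f` is the supremum of `lipQuotient f`. -/
noncomputable def lipQuotient (f : E → ℝ) (q : {q : E × E // q.1 ≠ q.2}) : ℝ :=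
  (f q.1.1 - f q.1.2) / dist q.1.1 q.1.2

lemma lipQuotient_sum_mul {ι : Type*} [Fintype ι] (a : ι → ℝ) (f : ι → E → ℝ)
    (q : {q : E × E // q.1 ≠ q.2}) :
    lipQuotient (fun x ↦ ∑ i, a i * f i x) q = ∑ i, lipQuotient (f i) q * a i := by
  simp only [lipQuotient]
  rw [← Finset.sum_sub_distrib, Finset.sum_div]
  exact Finset.sum_congr rfl fun i _ ↦ by ring

lemma lipQuotient_swap (f : E → ℝ) (q : {q : E × E // q.1 ≠ q.2}) :
    lipQuotient f ⟨q.1.swap, q.2.symm⟩ = -lipQuotient f q := by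
  simp only [lipQuotient, Prod.fst_swap, Prod.snd_swap]
  rw [dist_comm, ← neg_div, neg_sub]

variable [Finite E]

lemma abs_lipQuotient_le_lipSeminorm (f : E → ℝ) (q : {q : E × E // q.1 ≠ q.2}) :
    |lipQuotient f q| ≤ lipSeminorm f := by
  have hle (p) : lipQuotient f p ≤ lipSeminorm f :=
    le_ciSup (f := lipQuotient f) (Set.finite_range _).bddAbove p
  exact abs_le'.2 ⟨hle q, lipQuotient_swap f q ▸ hle _⟩

lemma lipSeminorm_nonneg (f : E → ℝ) : 0 ≤ lipSeminorm f := by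
  rcases isEmpty_or_nonempty {q : E × E // q.1 ≠ q.2} with hE | ⟨⟨q⟩⟩
  · exact (Real.iSup_of_isEmpty _).ge
  · exact (abs_nonneg _).trans (abs_lipQuotient_le_lipSeminorm f q)

lemma lipSeminorm_eq_iSup_abs_lipQuotient (f : E → ℝ) :
    lipSeminorm f = ⨆ q, |lipQuotient f q| :=
  le_antisymm (ciSup_mono (Set.finite_range _).bddAbove fun _ ↦ le_abs_self _)
    (Real.iSup_le (abs_lipQuotient_le_lipSeminorm f) (lipSeminorm_nonneg f))

end LipschitzSeminorm

section RandomSum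

variable {Ω ι E : Type*} {mΩ : MeasurableSpace Ω} {μ : Measure Ω} [Fintype ι] [MetricSpace E]
  {s : ι → Ω → ℝ} {c : ι → ℝ≥0}

lemma hasSubgaussianMGF_const_mul_of_abs_le {X : Ω → ℝ} {a b : ℝ≥0}
    (hX : HasSubgaussianMGF X a μ) {r : ℝ} (hr : |r| ≤ b) :
    HasSubgaussianMGF (fun ω ↦ r * X ω) (a * b ^ 2) μ where
  integrable_exp_mul := (hX.const_mul r).integrable_exp_mul
  mgf_le t := by
    have hr_sq : r ^ 2 ≤ (b : ℝ) ^ 2 := sq_le_sq.2 (hr.trans (le_abs_self _))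
    calc mgf (fun ω ↦ r * X ω) μ t = mgf X μ (r * t) := mgf_const_mul r
      _ ≤ exp (a * (r * t) ^ 2 / 2) := hX.mgf_le (r * t)
      _ = exp (a * r ^ 2 * t ^ 2 / 2) := by ring_nf
      _ ≤ exp (↑(a * b ^ 2) * t ^ 2 / 2) := by
        push_cast
        gcongr

lemma hasSubgaussianMGF_lipQuotient_sum_mul [Finite E] (h_indep : iIndepFun s μ)
    (hs : ∀ i, HasSubgaussianMGF (s i) (c i) μ) (f : ι → E → ℝ) (q : {q : E × E // q.1 ≠ q.2}) :
    HasSubgaussianMGF (fun ω ↦ lipQuotient (fun x ↦ ∑ i, s i ω * f i x) q)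
      (∑ i, c i * (lipSeminorm (f i)).toNNReal ^ 2) μ := by
  simp only [lipQuotient_sum_mul]
  exact HasSubgaussianMGF.sum_of_iIndepFun
    (h_indep.comp (fun i ↦ (lipQuotient (f i) q * ·)) fun i ↦ measurable_const_mul _)
    fun i _ ↦ hasSubgaussianMGF_const_mul_of_abs_le (hs i)
      ((abs_lipQuotient_le_lipSeminorm (f i) q).trans (le_coe_toNNReal _))

theorem stmt_16_general [Fintype E] [Nontrivial E] (h_indep : iIndepFun s μ)
    (hs : ∀ i, HasSubgaussianMGF (s i) (c i) μ) (f : ι → E → ℝ) :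
    ∫ ω, lipSeminorm (fun x ↦ ∑ i, s i ω * f i x) ^ 2 ∂μ
      ≤ 9 * (∑ i, c i * lipSeminorm (f i) ^ 2) * log (Fintype.card E) := by
  classical
  have := h_indep.isProbabilityMeasure
  set C := ∑ i, c i * (lipSeminorm (f i)).toNNReal ^ 2 with hC
  have hCreal : ∑ i, c i * lipSeminorm (f i) ^ 2 = (C : ℝ) := by
    simp [hC, lipSeminorm_nonneg]
  have hcard : (2 : ℝ) ≤ Fintype.card E := by exact_mod_cast Fintype.one_lt_card (α := E)
  have hlog : log 2 ≤ log (Fintype.card E) := log_le_log two_pos hcard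
  have hconst : 2 * (log (2 * Fintype.card {q : E × E // q.1 ≠ q.2}) + 1)
      ≤ 9 * log (Fintype.card E) := by
    linarith [log_two_mul_card_fst_ne_snd_le E, log_two_gt_d9]
  calc ∫ ω, lipSeminorm (fun x ↦ ∑ i, s i ω * f i x) ^ 2 ∂μ
      = ∫ ω, (⨆ q, |lipQuotient (fun x ↦ ∑ i, s i ω * f i x) q|) ^ 2 ∂μ := by
        simp only [lipSeminorm_eq_iSup_abs_lipQuotient]
    _ ≤ 2 * C * (log (2 * Fintype.card {q : E × E // q.1 ≠ q.2}) + 1) :=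
        integral_sq_iSup_abs_le (hasSubgaussianMGF_lipQuotient_sum_mul h_indep hs f)
    _ = C * (2 * (log (2 * Fintype.card {q : E × E // q.1 ≠ q.2}) + 1)) := by ring
    _ ≤ C * (9 * log (Fintype.card E)) :=
        mul_le_mul_of_nonneg_left hconst C.coe_nonneg
    _ = 9 * (∑ i, c i * lipSeminorm (f i) ^ 2) * log (Fintype.card E) := by
        rw [hCreal]
        ring

end RandomSum

section UniformSigns

lemma integral_uniformOn_univ {Ω : Type*} [Fintype Ω] [MeasurableSpace Ω]
    [DiscreteMeasurableSpace Ω] (g : Ω → ℝ) :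
    ∫ ω, g ω ∂uniformOn Set.univ = (1 / Fintype.card Ω) * ∑ ω, g ω := by
  simp [uniformOn, ProbabilityTheory.cond]

lemma hasSubgaussianMGF_ite_uniformOn_bool :
    HasSubgaussianMGF (fun b : Bool ↦ if b then (1 : ℝ) else -1) 1 (uniformOn Set.univ) := by
  have hmean : ∫ b : Bool, (if b then (1 : ℝ) else -1) ∂uniformOn Set.univ = 0 := by
    rw [integral_uniformOn_univ, Fintype.sum_bool]
    norm_num
  convert hasSubgaussianMGF_of_mem_Icc_of_integral_eq_zero (a := -1) (b := 1)
    Measurable.of_discrete.aemeasurable (.of_forall fun b ↦ ?_) hmean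
  · ext
    norm_num
  · cases b <;> simp

variable {Ω ι : Type*} [Finite Ω] [MeasurableSpace Ω] [MeasurableSingletonClass Ω]

lemma uniformOn_univ_eq_pi [Fintype ι] :
    uniformOn (Set.univ : Set (ι → Ω)) = Measure.pi fun _ ↦ uniformOn Set.univ := by
  rw [← uniformOn_pi, Set.pi_univ]

variable [Finite ι] [Nonempty Ω]

lemma iIndepFun_comp_eval_uniformOn_univ (X : ι → Ω → ℝ) :
    iIndepFun (fun i (ω : ι → Ω) ↦ X i (ω i)) (uniformOn Set.univ) := by
  have := Fintype.ofFinite ι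
  rw [uniformOn_univ_eq_pi]
  exact iIndepFun_pi fun _ ↦ Measurable.of_discrete.aemeasurable

lemma hasSubgaussianMGF_comp_eval_uniformOn_univ {X : Ω → ℝ} {c : ℝ≥0}
    (hX : HasSubgaussianMGF X c (uniformOn Set.univ)) (i : ι) :
    HasSubgaussianMGF (fun ω : ι → Ω ↦ X (ω i)) c (uniformOn Set.univ) := by
  have := Fintype.ofFinite ι
  rw [uniformOn_univ_eq_pi]
  refine .of_map (X := X) (measurable_pi_apply i).aemeasurable ?_
  rwa [(measurePreserving_eval _ i).map_eq]

end UniformSigns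

/-- **Lemma (Lipbound).** Let `E` be a finite metric space with at least two points,
and let `f₁, …, f_m : E → ℝ` satisfy `‖f_i‖_Lip ≤ 1`. Let `s₁, …, s_m` be independent
Rademacher random variables (modeled by averaging over all sign patterns
`ε : Fin m → Bool`, with `s_i = 1` if `ε i` and `s_i = −1` otherwise). Then
`𝔼 ‖∑ s_i f_i‖_Lip² ≤ 14 m ln |E|`. -/
theorem stmt_16 {E : Type*} [MetricSpace E] [Fintype E] (hE : 2 ≤ Fintype.card E)
    (m : ℕ) (hm : 1 ≤ m) (f : Fin m → E → ℝ) (hf : ∀ i, lipSeminorm (f i) ≤ 1) :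
    (1 / 2 ^ m : ℝ) *
        ∑ ε : Fin m → Bool,
          (lipSeminorm (fun x => ∑ i, (if ε i then (1 : ℝ) else -1) * f i x)) ^ 2
      ≤ 14 * m * Real.log (Fintype.card E) := by
  have := Fintype.one_lt_card_iff_nontrivial.1 hE
  have h_sum : ∑ i, lipSeminorm (f i) ^ 2 ≤ m := by
    simpa using Finset.sum_le_card_nsmul Finset.univ _ 1
      fun i _ ↦ pow_le_one₀ (lipSeminorm_nonneg (f i)) (hf i)
  have h_general := stmt_16_general
    (iIndepFun_comp_eval_uniformOn_univ fun (_ : Fin m) (b : Bool) ↦ if b then (1 : ℝ) else -1)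
    (hasSubgaussianMGF_comp_eval_uniformOn_univ hasSubgaussianMGF_ite_uniformOn_bool) f
  rw [integral_uniformOn_univ] at h_general
  calc _ ≤ 9 * (∑ i, (1 : ℝ≥0) * lipSeminorm (f i) ^ 2) * log (Fintype.card E) := by
        simpa using h_general
    _ ≤ 14 * m * log (Fintype.card E) := by
        simp only [NNReal.coe_one, one_mul]
        gcongr
        norm_num
end
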